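/- Let F : (X × {−1,1})^m → [0,1] be measurable and let 𝒟' be a label distribution consistent with 𝒟. If the hybrid values satisfy a_0(F) ≥ 2/3 and a_m(F) ≤ 1/3, then there exists an index i ∈ {1,…,m} such that E_{(x,y)∼𝒟'}[y · h_i(x)] ≥ 2/(3m). -/

import Mathlib

/-!
The proof is a hybrid argument. Passing from the `i`-th hybrid measure to the next one changes only
the law of coordinate `i`, from `𝒟'` to `𝒟 ⊗ U`. In a product measure a single coordinate may be
resampled independently (`map_update_prod_pi`), so with `G (x, b) = W_{i,b}(x)` the two hybrid values
are `∫ G d𝒟'` and `∫ G d(𝒟 ⊗ U)`. Since `𝒟` is the marginal of `𝒟'`, the latter equals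
`E_{𝒟'} [(W_{i,1}(x) + W_{i,-1}(x)) / 2]`, and the pointwise identity
`W_{i,y} - (W_{i,1} + W_{i,-1}) / 2 = y * h_i / 2` gives `E_{𝒟'} [y * h_i] = 2 * (a_i - a_{i+1})`
(`integral_sgn_mul_hybridHyp`). Telescoping, these `m` correlations sum to
`2 * (a_0 - a_m) ≥ 2 / 3`, so one of them is at least the average `2 / (3 * m)`.
-/

open MeasureTheory ProbabilityTheory

noncomputable section

/-- The ±1 real value of a Boolean label (`true` encodes the label 1, `false` the label −1). -/
def sgn (b : Bool) : ℝ := if b then 1 else -1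

/-- The uniform probability measure on the labels {−1, 1} (encoded as `Bool`). -/
def unifLabel : Measure Bool := (PMF.uniformOfFintype Bool).toMeasure

instance : IsProbabilityMeasure unifLabel :=
  PMF.toMeasure.isProbabilityMeasure _

/-- The hybrid product measure on `(X × {−1,1})^m` in which the coordinates of index `< i`
are drawn i.i.d. from `P = 𝒟 ⊗ U` and the remaining coordinates are drawn i.i.d. from `𝒟'`. -/
def hybridMeasure {X : Type*} [MeasurableSpace X] (m : ℕ) (D : Measure X)
    (D' : Measure (X × Bool)) (i : ℕ) : Measure (Fin m → X × Bool) :=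
  Measure.pi (fun j : Fin m => if (j : ℕ) < i then D.prod unifLabel else D')

/-- The hybrid value `a_i(F) = ∫ F d(P^{⊗i} ⊗ (𝒟')^{⊗(m−i)})`: the first `i` coordinates are
drawn i.i.d. from `P = 𝒟 ⊗ U` and the remaining `m − i` are drawn i.i.d. from `𝒟'`. -/
def hybridVal {X : Type*} [MeasurableSpace X] (m : ℕ) (D : Measure X)
    (D' : Measure (X × Bool)) (F : (Fin m → X × Bool) → ℝ) (i : ℕ) : ℝ :=
  ∫ z, F z ∂(hybridMeasure m D D' i)

/-- The hybrid function `W_{i,b}(x)`: run `F` with the `i`-th coordinate planted to `(x, b)`,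
the coordinates before `i` drawn i.i.d. from `P = 𝒟 ⊗ U` and the coordinates after `i` drawn
i.i.d. from `𝒟'`.  (The `i`-th coordinate of the integration variable is overwritten by
`Function.update`, so integrating it out over a probability measure has no effect.)
Here `i` is the 0-based index corresponding to the paper's 1-based index `i + 1`. -/
def hybridW {X : Type*} [MeasurableSpace X] (m : ℕ) (D : Measure X)
    (D' : Measure (X × Bool)) (F : (Fin m → X × Bool) → ℝ) (i : Fin m) (b : Bool)
    (x : X) : ℝ :=
  ∫ z, F (Function.update z i (x, b)) ∂(hybridMeasure m D D' i)

/-- The hybrid hypothesis `h_i(x) = W_{i,1}(x) − W_{i,−1}(x) ∈ [−1,1]`. -/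
def hybridHyp {X : Type*} [MeasurableSpace X] (m : ℕ) (D : Measure X)
    (D' : Measure (X × Bool)) (F : (Fin m → X × Bool) → ℝ) (i : Fin m) (x : X) : ℝ :=
  hybridW m D D' F i true x - hybridW m D D' F i false x

lemma measurable_update_prod {ι Y : Type*} [DecidableEq ι] [MeasurableSpace Y] (i : ι) :
    Measurable (fun p : Y × (ι → Y) => Function.update p.2 i p.1) := by
  rw [measurable_pi_iff]
  intro j
  by_cases hj : j = i
  · subst hj; simpa using measurable_fst
  · simp only [Function.update_of_ne hj]
    exact (measurable_pi_apply j).comp measurable_snd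

/-- Overwriting coordinate `i` of a sample from `Measure.pi ν` by an independent sample from `μ i`
yields `Measure.pi μ`, provided that `ν` and `μ` agree away from `i`. -/
lemma map_update_prod_pi {ι Y : Type*} [Fintype ι] [DecidableEq ι] [MeasurableSpace Y]
    (μ ν : ι → Measure Y) [∀ j, IsProbabilityMeasure (μ j)] [∀ j, IsProbabilityMeasure (ν j)]
    (i : ι) (h : ∀ j, j ≠ i → ν j = μ j) :
    ((μ i).prod (Measure.pi ν)).map (fun p => Function.update p.2 i p.1) = Measure.pi μ := by
  have hmeas := measurable_update_prod (Y := Y) i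
  refine (Measure.pi_eq fun s hs => ?_).symm
  rw [Measure.map_apply hmeas (MeasurableSet.univ_pi hs)]
  have hpre : (fun p : Y × (ι → Y) => Function.update p.2 i p.1) ⁻¹' (Set.univ.pi s)
      = s i ×ˢ Set.univ.pi (Function.update s i Set.univ) := by
    ext ⟨w, z⟩
    simp only [Set.mem_preimage, Set.mem_univ_pi, Set.mem_prod]
    constructor
    · intro hz
      refine ⟨by simpa using hz i, fun j => ?_⟩
      by_cases hj : j = i
      · subst hj; simp
      · simpa [Function.update_of_ne hj] using hz j
    · rintro ⟨hw, hz⟩ j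
      by_cases hj : j = i
      · subst hj; simpa using hw
      · simpa [Function.update_of_ne hj] using hz j
  rw [hpre, Measure.prod_prod, Measure.pi_pi,
    ← Finset.mul_prod_erase Finset.univ (fun j => (μ j) (s j)) (Finset.mem_univ i),
    ← Finset.mul_prod_erase Finset.univ (fun j => (ν j) (Function.update s i Set.univ j))
      (Finset.mem_univ i)]
  simp only [Function.update_self, measure_univ, one_mul]
  congr 1
  refine Finset.prod_congr rfl fun j hj => ?_
  have hj' := Finset.ne_of_mem_erase hj
  rw [h j hj', Function.update_of_ne hj']

lemma integral_pi_eq_integral_update {ι Y : Type*} [Fintype ι] [DecidableEq ι]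
    [MeasurableSpace Y] (μ ν : ι → Measure Y) [∀ j, IsProbabilityMeasure (μ j)]
    [∀ j, IsProbabilityMeasure (ν j)] (i : ι) (h : ∀ j, j ≠ i → ν j = μ j)
    (F : (ι → Y) → ℝ) (hF : Measurable F) (hFbd : ∀ z, F z ∈ Set.Icc (0 : ℝ) 1) :
    ∫ z, F z ∂(Measure.pi μ)
      = ∫ w, ∫ z, F (Function.update z i w) ∂(Measure.pi ν) ∂(μ i) := by
  have hmeas := measurable_update_prod (Y := Y) i
  rw [← map_update_prod_pi μ ν i h, integral_map hmeas.aemeasurable hF.aestronglyMeasurable]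
  refine integral_prod (fun p : Y × (ι → Y) => F (Function.update p.2 i p.1)) ?_
  refine Integrable.of_bound (hF.comp hmeas).aestronglyMeasurable 1 (ae_of_all _ fun p => ?_)
  have := hFbd (Function.update p.2 i p.1)
  rw [Real.norm_eq_abs, abs_le]
  exact ⟨by linarith [this.1], this.2⟩

lemma integral_unifLabel (g : Bool → ℝ) :
    ∫ b, g b ∂unifLabel = (g true + g false) / 2 := by
  rw [unifLabel, PMF.integral_eq_sum]
  simp
  ring

/-- The correlation of `h_i` with the labels is twice the drop between consecutive hybrid values. -/
lemma integral_sgn_mul_hybridHyp {X : Type*} [MeasurableSpace X]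
    (D : Measure X) [IsProbabilityMeasure D]
    (D' : Measure (X × Bool)) [IsProbabilityMeasure D']
    (hD' : D'.map Prod.fst = D)
    (m : ℕ) (F : (Fin m → X × Bool) → ℝ) (hFmeas : Measurable F)
    (hFbd : ∀ z, F z ∈ Set.Icc (0 : ℝ) 1) (i : Fin m) :
    ∫ z, sgn z.2 * hybridHyp m D D' F i z.1 ∂D'
      = 2 * (hybridVal m D D' F i - hybridVal m D D' F (i + 1)) := by
  have inst : ∀ k : ℕ, ∀ j : Fin m,
      IsProbabilityMeasure (if (j : ℕ) < k then D.prod unifLabel else D') := by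
    intro k j; split_ifs <;> infer_instance
  set G : X × Bool → ℝ := fun w => ∫ z, F (Function.update z i w) ∂(hybridMeasure m D D' i)
    with hG
  have : IsProbabilityMeasure (hybridMeasure m D D' i) := by
    unfold hybridMeasure; infer_instance
  have hGmeas : Measurable G := by
    have : StronglyMeasurable (fun p : (X × Bool) × (Fin m → X × Bool) =>
        F (Function.update p.2 i p.1)) :=
      (hFmeas.comp (measurable_update_prod i)).stronglyMeasurable
    exact this.integral_prod_right.measurable
  have hGbd : ∀ w, ‖G w‖ ≤ 1 := by
    intro w
    refine (norm_integral_le_of_norm_le_const (C := 1) (ae_of_all _ fun z => ?_)).trans (by simp)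
    have := hFbd (Function.update z i w)
    rw [Real.norm_eq_abs, abs_le]
    exact ⟨by linarith [this.1], this.2⟩
  have hGint : ∀ (μ : Measure (X × Bool)) [IsProbabilityMeasure μ], Integrable G μ := fun μ _ =>
    Integrable.of_bound hGmeas.aestronglyMeasurable 1 (ae_of_all _ hGbd)
  have ha : hybridVal m D D' F i = ∫ w, G w ∂D' := by
    have := integral_pi_eq_integral_update
      (fun j : Fin m => if (j : ℕ) < i then D.prod unifLabel else D')
      (fun j : Fin m => if (j : ℕ) < i then D.prod unifLabel else D') i
      (fun _ _ => rfl) F hFmeas hFbd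
    simpa [hybridVal, hybridMeasure, hG] using this
  have hb : hybridVal m D D' F (i + 1) = ∫ w, G w ∂(D.prod unifLabel) := by
    have := integral_pi_eq_integral_update
      (fun j : Fin m => if (j : ℕ) < i + 1 then D.prod unifLabel else D')
      (fun j : Fin m => if (j : ℕ) < i then D.prod unifLabel else D') i
      (fun j hj => by
        have hne : (j : ℕ) ≠ i := fun hji => hj (Fin.ext hji)
        have : (j : ℕ) < i + 1 ↔ (j : ℕ) < i := by omega
        simp only [this]) F hFmeas hFbd
    simpa only [hybridVal, hybridMeasure, hG, Nat.lt_succ_self, if_true] using this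
  have hsec : ∀ b : Bool, Measurable (fun x : X => G (x, b)) := fun b =>
    hGmeas.comp (measurable_id.prodMk measurable_const)
  have hsecint : ∀ b : Bool, Integrable (fun z : X × Bool => G (z.1, b)) D' := fun b =>
    Integrable.of_bound ((hsec b).comp measurable_fst).aestronglyMeasurable 1
      (ae_of_all _ fun z => hGbd _)
  have hb' : ∫ w, G w ∂(D.prod unifLabel)
      = ∫ z, (G (z.1, true) + G (z.1, false)) / 2 ∂D' := by
    rw [integral_prod _ (hGint _)]
    simp only [fun x : X => integral_unifLabel (fun b => G (x, b))]
    conv_lhs => rw [← hD']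
    exact integral_map measurable_fst.aemeasurable
      (((hsec true).add (hsec false)).div_const 2).aestronglyMeasurable
  have hmid : Integrable (fun z : X × Bool => (G (z.1, true) + G (z.1, false)) / 2) D' :=
    ((hsecint true).add (hsecint false)).div_const 2
  rw [ha, hb, hb', ← integral_sub (hGint D') hmid,
    ← integral_const_mul]
  refine integral_congr_ae (ae_of_all _ ?_)
  rintro ⟨x, b⟩
  have hW : ∀ b, hybridW m D D' F i b x = G (x, b) := fun _ => rfl
  cases b <;> simp only [hybridHyp, hW, sgn, if_true, Bool.false_eq_true, if_false] <;> ring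

/-- core of the paper's Lemma 3.2. Let `F : (X × {−1,1})^m → [0,1]` be
measurable and let `𝒟'` be a label distribution consistent with `𝒟`. If the hybrid values
satisfy `a_0(F) ≥ 2/3` and `a_m(F) ≤ 1/3`, then there exists an index `i ∈ {1,…,m}`
(represented by the 0-based `i : Fin m`) such that `E_{(x,y)∼𝒟'}[y·h_i(x)] ≥ 2/(3m)`. -/
theorem exists_correlating_hybrid_hypothesis
    {X : Type*} [MeasurableSpace X]
    (D : Measure X) [IsProbabilityMeasure D]
    (D' : Measure (X × Bool)) [IsProbabilityMeasure D']
    (hD' : D'.map Prod.fst = D)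
    (m : ℕ) (F : (Fin m → X × Bool) → ℝ) (hFmeas : Measurable F)
    (hFbd : ∀ z, F z ∈ Set.Icc (0 : ℝ) 1)
    (h0 : (2 : ℝ) / 3 ≤ hybridVal m D D' F 0)
    (hm : hybridVal m D D' F m ≤ (1 : ℝ) / 3) :
    ∃ i : Fin m, (2 : ℝ) / (3 * m) ≤ ∫ z, sgn z.2 * hybridHyp m D D' F i z.1 ∂D' := by
  have hsum : ∑ i : Fin m, ∫ z, sgn z.2 * hybridHyp m D D' F i z.1 ∂D'
      = 2 * (hybridVal m D D' F 0 - hybridVal m D D' F m) := by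
    simp only [integral_sgn_mul_hybridHyp D D' hD' m F hFmeas hFbd]
    rw [← Finset.mul_sum, Fin.sum_univ_eq_sum_range
      (fun k => hybridVal m D D' F k - hybridVal m D D' F (k + 1)) m, Finset.sum_range_sub']
  have hm0 : m ≠ 0 := by
    rintro rfl
    -- The hypotheses on `a_0` and `a_m` contradict each other.
    linarith
  by_contra! hlt
  have : Nonempty (Fin m) := ⟨⟨0, Nat.pos_of_ne_zero hm0⟩⟩
  have hs := Finset.sum_lt_sum_of_nonempty Finset.univ_nonempty (fun i _ => hlt i)
  rw [hsum, Finset.sum_const, Finset.card_univ, Fintype.card_fin, nsmul_eq_mul] at hs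
  have hm' : (m : ℝ) ≠ 0 := Nat.cast_ne_zero.mpr hm0
  have : (m : ℝ) * (2 / (3 * m)) = 2 / 3 := by field_simp
  linarith
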